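/- (Lieb–Thirring inequality, finite orthonormal families) There exists a constant K_d > 0 depending only on the dimension d such that: for every N ≥ 1, every family u_1, …, u_N of smooth compactly supported functions from ℝ^d to ℂ that is orthonormal in L²(ℝ^d), and every choice of coefficients λ_1, …, λ_N ∈ [0,1], one has Σ_{n=1}^N λ_n ∫_{ℝ^d} |∇u_n(x)|² dx ≥ K_d ∫_{ℝ^d} ρ(x)^{1+2/d} dx, where ρ(x) = Σ_{n=1}^N λ_n |u_n(x)|². The constant K_d is independent of N. -/

import Mathlib

open MeasureTheory
open scoped BigOperators

/-- `|∇f(x)|² = Σᵢ |∂ᵢ f(x)|²` for a function `f : ℝ^d → ℂ`. -/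
noncomputable def gradSq {d : ℕ} (f : EuclideanSpace ℝ (Fin d) → ℂ)
    (x : EuclideanSpace ℝ (Fin d)) : ℝ :=
  ∑ i : Fin d, ‖fderiv ℝ f x (EuclideanSpace.single i 1)‖ ^ 2

/-!
Split each orbital at momentum `2 ^ j` by a smooth cutoff. By Bessel's inequality, orthonormality
and `λₙ ≤ 1` bound the density of the low-momentum parts at every point by the squared `L²` norm of
the cutoff, hence by `c * 2 ^ (j * d)`. At each `x`, at the scale where this bound is about
`ρ(x) / 4`, the high-momentum parts therefore carry at least `ρ(x) / 4` of the density, while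
`4 ^ j` is comparable to `ρ(x) ^ (2 / d)`. Thus `ρ ^ (1 + 2 / d)` is dominated by the sum over all
`j` of `4 ^ j` times the high-momentum densities. By Plancherel the integral of that sum is
at most the sum of `4 ^ j` times the mass of the momentum distribution on `4 ^ j < ‖k‖ ^ 2`, a
geometric series that adds up to at most `4 / 3` of the integral of `‖k‖ ^ 2`, which is a multiple
of the kinetic energy.
-/

open FourierTransform Module SchwartzMap
open scoped Real

section Dyadic

lemma tsum_ite_zpow_lt_le {b : ℝ} (hb : 1 < b) (r : ℝ) :
    ∑' j : ℤ, (if b ^ j < r then ENNReal.ofReal (b ^ j) else 0)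
      ≤ ENNReal.ofReal (b / (b - 1) * r) := by
  have hb0 : 0 < b := one_pos.trans hb
  obtain hr | hr := le_or_gt r 0
  · simp [fun j : ℤ => (hr.trans (zpow_pos hb0 j).le).not_gt]
  obtain ⟨m, hmr, hrm⟩ := exists_mem_Ioc_zpow hr hb
  have hinj : Function.Injective fun i : ℕ => m - (i : ℤ) := fun i i' h => by simpa using h
  have hsupp : (Function.support fun j : ℤ => if b ^ j < r then ENNReal.ofReal (b ^ j) else 0)
      ⊆ Set.range fun i : ℕ => m - (i : ℤ) := by
    intro j hj
    have hjr : b ^ j < r := by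
      by_contra h
      simp [h] at hj
    have hjm : j < m + 1 := (zpow_lt_zpow_iff_right₀ hb).1 (hjr.trans_le hrm)
    exact ⟨(m - j).toNat, by simp only; omega⟩
  have hgeom : HasSum (fun i : ℕ => b ^ m * b⁻¹ ^ i) (b ^ m * (1 - b⁻¹)⁻¹) :=
    (hasSum_geometric_of_lt_one (by positivity) (inv_lt_one_of_one_lt₀ hb)).mul_left _
  calc ∑' j : ℤ, (if b ^ j < r then ENNReal.ofReal (b ^ j) else 0)
      = ∑' i : ℕ, (if b ^ (m - i : ℤ) < r then ENNReal.ofReal (b ^ (m - i : ℤ)) else 0) :=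
        (hinj.tsum_eq hsupp).symm
    _ ≤ ∑' i : ℕ, ENNReal.ofReal (b ^ m * b⁻¹ ^ i) := by
        refine ENNReal.tsum_le_tsum fun i => ?_
        rw [zpow_sub₀ hb0.ne', zpow_natCast, div_eq_mul_inv, ← inv_pow]
        split_ifs <;> simp
    _ = ENNReal.ofReal (b / (b - 1) * b ^ m) := by
        rw [← ENNReal.ofReal_tsum_of_nonneg (fun i => by positivity) hgeom.summable,
          hgeom.tsum_eq]
        congr 1
        field_simp
    _ ≤ ENNReal.ofReal (b / (b - 1) * r) := by
        have := sub_pos.2 hb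
        gcongr

lemma tsum_zpow_mul_measure_lt_le {α : Type*} [MeasurableSpace α] (μ : Measure α) {g : α → ℝ}
    (hg : Measurable g) {b : ℝ} (hb : 1 < b) :
    ∑' j : ℤ, ENNReal.ofReal (b ^ j) * μ {x | b ^ j < g x}
      ≤ ∫⁻ x, ENNReal.ofReal (b / (b - 1) * g x) ∂μ := by
  have hmeas (j : ℤ) : MeasurableSet {x | b ^ j < g x} := measurableSet_lt measurable_const hg
  calc ∑' j : ℤ, ENNReal.ofReal (b ^ j) * μ {x | b ^ j < g x}
      = ∑' j : ℤ, ∫⁻ x, {x | b ^ j < g x}.indicator (fun _ => ENNReal.ofReal (b ^ j)) x ∂μ :=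
        tsum_congr fun j => (lintegral_indicator_const (hmeas j) _).symm
    _ = ∫⁻ x, ∑' j : ℤ, (if b ^ j < g x then ENNReal.ofReal (b ^ j) else 0) ∂μ :=
        (lintegral_tsum fun j => (measurable_const.indicator (hmeas j)).aemeasurable).symm
    _ ≤ ∫⁻ x, ENNReal.ofReal (b / (b - 1) * g x) ∂μ :=
        lintegral_mono fun x => tsum_ite_zpow_lt_le hb (g x)

lemma two_zpow_sq (j : ℤ) : ((2 : ℝ) ^ j) ^ 2 = 4 ^ j := by
  rw [sq, ← mul_zpow]
  norm_num

lemma exists_two_zpow_pow_le {d : ℕ} (hd : d ≠ 0) {s : ℝ} (hs : 0 < s) :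
    ∃ j : ℤ, ((2 : ℝ) ^ j) ^ d ≤ s ∧ s ^ (2 / d : ℝ) / 4 ≤ 4 ^ j := by
  obtain ⟨j, hle, hlt⟩ := exists_mem_Ico_zpow (Real.rpow_pos_of_pos hs (d : ℝ)⁻¹) one_lt_two
  refine ⟨j, ?_, ?_⟩
  · calc ((2 : ℝ) ^ j) ^ d ≤ (s ^ (d : ℝ)⁻¹) ^ d := by gcongr
      _ = s := Real.rpow_inv_natCast_pow hs.le hd
  · calc s ^ (2 / d : ℝ) / 4 = (s ^ (d : ℝ)⁻¹) ^ 2 / 4 := by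
          rw [← Real.rpow_mul_natCast hs.le, Nat.cast_ofNat, inv_mul_eq_div]
      _ ≤ ((2 : ℝ) ^ (j + 1)) ^ 2 / 4 := by gcongr
      _ = 4 ^ j := by
          rw [two_zpow_sq, zpow_add_one₀ four_ne_zero, mul_div_cancel_right₀ _ four_ne_zero]

/-- Choose the scale `j` at which the error `2 * (c * 2 ^ (j * d))` absorbs half of `r`. -/
lemma ofReal_rpow_le_tsum {d : ℕ} (hd : d ≠ 0) {c r : ℝ} (hc : 0 < c) (hr : 0 ≤ r) {a : ℤ → ℝ}
    (h : ∀ j : ℤ, r ≤ 2 * a j + 2 * (c * ((2 : ℝ) ^ j) ^ d)) :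
    ENNReal.ofReal ((4 * c) ^ (-(2 / d) : ℝ) / 16 * r ^ (1 + 2 / d : ℝ))
      ≤ ∑' j : ℤ, ENNReal.ofReal (4 ^ j * a j) := by
  obtain rfl | hr := hr.eq_or_lt
  · rw [Real.zero_rpow (by positivity), mul_zero, ENNReal.ofReal_zero]
    exact zero_le
  obtain ⟨j, hsmall, hlarge⟩ := exists_two_zpow_pow_le hd (show 0 < r / (4 * c) by positivity)
  have ha : r / 4 ≤ a j := by
    rw [le_div_iff₀ (by positivity)] at hsmall
    linarith [h j]
  refine (ENNReal.ofReal_le_ofReal ?_).trans (ENNReal.le_tsum j)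
  calc (4 * c) ^ (-(2 / d) : ℝ) / 16 * r ^ (1 + 2 / d : ℝ)
      = (r / (4 * c)) ^ (2 / d : ℝ) / 4 * (r / 4) := by
        rw [Real.rpow_add hr, Real.rpow_one, Real.div_rpow hr.le (by positivity),
          Real.rpow_neg (by positivity)]
        ring
    _ ≤ 4 ^ j * a j := by gcongr

end Dyadic

variable {E F ι κ : Type*} [Fintype ι] [Fintype κ]

section Density

variable [NormedAddCommGroup E] [NormedSpace ℝ E] [NormedAddCommGroup F] [NormedSpace ℝ F]

/-- The density `∑ₙ λₙ |fₙ(x)|²` of the mixed state with orbitals `fₙ` and occupation numbers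
`λₙ`. Applied to the Fourier transforms of the orbitals it is the momentum density. -/
def density (lam : ι → ℝ) (f : ι → 𝓢(E, F)) (x : E) : ℝ :=
  ∑ n, lam n * ‖f n x‖ ^ 2

lemma continuous_density (lam : ι → ℝ) (f : ι → 𝓢(E, F)) : Continuous (density lam f) :=
  continuous_finsetSum _ fun n _ => ((f n).continuous.norm.pow 2).const_mul _

lemma density_nonneg {lam : ι → ℝ} (hlam : ∀ n, 0 ≤ lam n) (f : ι → 𝓢(E, F)) (x : E) :
    0 ≤ density lam f x :=
  Finset.sum_nonneg fun n _ => mul_nonneg (hlam n) (sq_nonneg _)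

lemma density_le_two_mul_density_sub_add {lam : ι → ℝ} (hlam : ∀ n, 0 ≤ lam n)
    (f g : ι → 𝓢(E, F)) (x : E) :
    density lam f x ≤ 2 * density lam (fun n => f n - g n) x + 2 * density lam g x := by
  simp only [density, Finset.mul_sum, ← Finset.sum_add_distrib]
  refine Finset.sum_le_sum fun n _ => ?_
  have hnorm : ‖f n x‖ ^ 2 ≤ 2 * (‖(f n - g n) x‖ ^ 2 + ‖g n x‖ ^ 2) :=
    calc ‖f n x‖ ^ 2 = ‖(f n - g n) x + g n x‖ ^ 2 := by rw [sub_apply, sub_add_cancel]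
      _ ≤ (‖(f n - g n) x‖ + ‖g n x‖) ^ 2 := by gcongr; exact norm_add_le _ _
      _ ≤ 2 * (‖(f n - g n) x‖ ^ 2 + ‖g n x‖ ^ 2) := add_sq_le
  linarith [mul_le_mul_of_nonneg_left hnorm (hlam n)]

variable [MeasurableSpace E] [BorelSpace E] [SecondCountableTopology E] {μ : Measure E}
  [μ.HasTemperateGrowth]

lemma integrable_norm_sq (f : 𝓢(E, F)) : Integrable (fun x => ‖f x‖ ^ 2) μ :=
  (f.memLp 2 μ).integrable_norm_pow two_ne_zero

lemma integrable_density (lam : ι → ℝ) (f : ι → 𝓢(E, F)) : Integrable (density lam f) μ :=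
  integrable_finsetSum Finset.univ fun n _ => (integrable_norm_sq (f n)).const_mul (lam n)

end Density

variable [NormedAddCommGroup E] [InnerProductSpace ℝ E] [FiniteDimensional ℝ E]
  [MeasurableSpace E] [BorelSpace E]

section Plancherel

open LineDeriv

variable [NormedAddCommGroup F] [InnerProductSpace ℂ F]

lemma sum_norm_sq_fourier_lineDeriv (b : OrthonormalBasis κ ℝ E) (f : 𝓢(E, F)) (k : E) :
    ∑ i, ‖𝓕 (∂_{b i} f) k‖ ^ 2 = (2 * π) ^ 2 * (‖k‖ ^ 2 * ‖𝓕 f k‖ ^ 2) := by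
  have hterm (i : κ) :
      ‖𝓕 (∂_{b i} f) k‖ ^ 2 = (2 * π) ^ 2 * (inner ℝ (b i) k ^ 2 * ‖𝓕 f k‖ ^ 2) := by
    have hgrowth : (inner ℝ · (b i)).HasTemperateGrowth := by fun_prop
    rw [fourier_lineDerivOp_eq, smul_apply, smulLeftCLM_apply_apply hgrowth, norm_smul, norm_smul,
      real_inner_comm]
    simp [mul_pow]
  simp only [hterm, ← Finset.mul_sum, ← Finset.sum_mul, b.sum_sq_inner_right]

lemma integrable_norm_sq_mul_norm_sq_fourier (f : 𝓢(E, F)) :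
    Integrable fun k => ‖k‖ ^ 2 * ‖𝓕 f k‖ ^ 2 := by
  have h := integrable_finsetSum Finset.univ fun i _ =>
    integrable_norm_sq (μ := volume) (𝓕 (∂_{stdOrthonormalBasis ℝ E i} f))
  simp only [sum_norm_sq_fourier_lineDeriv] at h
  exact (integrable_const_mul_iff (by simp [Real.pi_ne_zero]) _).1 h

lemma integrable_norm_sq_mul_density_fourier (lam : ι → ℝ) (f : ι → 𝓢(E, F)) :
    Integrable fun k => ‖k‖ ^ 2 * density lam (fun n => 𝓕 (f n)) k := by
  simp only [density, Finset.mul_sum, mul_left_comm (‖_‖ ^ 2)]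
  exact integrable_finsetSum _ fun n _ =>
    (integrable_norm_sq_mul_norm_sq_fourier (f n)).const_mul (lam n)

variable [CompleteSpace F]

lemma integral_sum_norm_sq_fderiv (b : OrthonormalBasis κ ℝ E) (f : 𝓢(E, F)) :
    ∫ x, ∑ i, ‖fderiv ℝ f x (b i)‖ ^ 2 = (2 * π) ^ 2 * ∫ k, ‖k‖ ^ 2 * ‖𝓕 f k‖ ^ 2 :=
  calc ∫ x, ∑ i, ‖fderiv ℝ f x (b i)‖ ^ 2
      = ∑ i, ∫ x, ‖(∂_{b i} f) x‖ ^ 2 :=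
        integral_finsetSum _ fun i _ => integrable_norm_sq (∂_{b i} f)
    _ = ∑ i, ∫ k, ‖𝓕 (∂_{b i} f) k‖ ^ 2 := by simp only [integral_norm_sq_fourier]
    _ = ∫ k, ∑ i, ‖𝓕 (∂_{b i} f) k‖ ^ 2 :=
        (integral_finsetSum _ fun i _ => integrable_norm_sq _).symm
    _ = (2 * π) ^ 2 * ∫ k, ‖k‖ ^ 2 * ‖𝓕 f k‖ ^ 2 := by
        simp only [sum_norm_sq_fourier_lineDeriv, integral_const_mul]

lemma sum_mul_integral_sum_norm_sq_fderiv (b : OrthonormalBasis κ ℝ E) (lam : ι → ℝ)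
    (f : ι → 𝓢(E, F)) :
    ∑ n, lam n * ∫ x, ∑ i, ‖fderiv ℝ (f n) x (b i)‖ ^ 2
      = (2 * π) ^ 2 * ∫ k, ‖k‖ ^ 2 * density lam (fun n => 𝓕 (f n)) k := by
  simp only [density, Finset.mul_sum, mul_left_comm (‖_‖ ^ 2), integral_sum_norm_sq_fderiv]
  rw [integral_finsetSum _ fun n _ =>
    (integrable_norm_sq_mul_norm_sq_fourier (f n)).const_mul (lam n), Finset.mul_sum]
  simp only [integral_const_mul, mul_left_comm (lam _) ((2 * π) ^ 2)]

lemma lintegral_density_fourier {lam : ι → ℝ} (hlam : ∀ n, 0 ≤ lam n) (f : ι → 𝓢(E, F)) :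
    ∫⁻ k, ENNReal.ofReal (density lam (fun n => 𝓕 (f n)) k)
      = ∫⁻ x, ENNReal.ofReal (density lam f x) := by
  have hnonneg (g : ι → 𝓢(E, F)) : 0 ≤ᵐ[volume] density lam g := .of_forall (density_nonneg hlam g)
  rw [← ofReal_integral_eq_lintegral_ofReal (integrable_density _ _) (hnonneg _),
    ← ofReal_integral_eq_lintegral_ofReal (integrable_density _ _) (hnonneg _)]
  simp only [density]
  rw [integral_finsetSum _ fun n _ => (integrable_norm_sq _).const_mul _,
    integral_finsetSum _ fun n _ => (integrable_norm_sq _).const_mul _]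
  simp only [integral_const_mul, integral_norm_sq_fourier]

lemma fourier_sub_fourierMultiplierCLM_apply {χ : E → ℝ} (hχ : χ.HasTemperateGrowth)
    (f : 𝓢(E, F)) (k : E) :
    𝓕 (f - fourierMultiplierCLM F χ f) k = (1 - χ k) • 𝓕 f k := by
  rw [sub_eq_add_neg, FourierTransform.fourier_add, FourierTransform.fourier_neg,
    fourierMultiplierCLM_apply, FourierTransform.fourier_fourierInv_eq, ← sub_eq_add_neg, sub_apply,
    smulLeftCLM_apply_apply hχ, sub_smul, one_smul]

lemma lintegral_density_sub_fourierMultiplierCLM {lam : ι → ℝ} (hlam : ∀ n, 0 ≤ lam n)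
    {χ : E → ℝ} (hχ : χ.HasTemperateGrowth) (f : ι → 𝓢(E, F)) :
    ∫⁻ x, ENNReal.ofReal (density lam (fun n => f n - fourierMultiplierCLM F χ (f n)) x)
      = ∫⁻ k, ENNReal.ofReal ((1 - χ k) ^ 2 * density lam (fun n => 𝓕 (f n)) k) := by
  rw [← lintegral_density_fourier hlam]
  simp only [density, fourier_sub_fourierMultiplierCLM_apply hχ, norm_smul, mul_pow,
    Real.norm_eq_abs, sq_abs, Finset.mul_sum, mul_left_comm ((1 - χ _) ^ 2)]

end Plancherel

section Bessel

lemma orthonormal_toLp_iff {ι : Type*} [DecidableEq ι] {f : ι → 𝓢(E, ℂ)} :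
    Orthonormal ℂ (fun n => (f n).toLp 2) ↔
      ∀ m n, ∫ x, f m x * (starRingEnd ℂ) (f n x) = if m = n then 1 else 0 := by
  simp only [orthonormal_iff_ite, inner_toL2_toL2_eq, RCLike.inner_apply]
  rw [forall_comm]
  simp only [eq_comm]

lemma orthonormal_toLp_fourier {ι : Type*} {f : ι → 𝓢(E, ℂ)}
    (hf : Orthonormal ℂ fun n => (f n).toLp 2) : Orthonormal ℂ fun n => (𝓕 (f n)).toLp 2 := by
  classical
  simpa only [orthonormal_iff_ite, inner_fourier_toL2_eq] using hf

lemma norm_toLp_two_sq {α G : Type*} [MeasurableSpace α] {μ : Measure α} [NormedAddCommGroup G]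
    {g : α → G} (hg : MemLp g 2 μ) : ‖hg.toLp g‖ ^ 2 = ∫ a, ‖g a‖ ^ 2 ∂μ := by
  rw [Lp.norm_toLp, hg.eLpNorm_eq_integral_rpow_norm two_ne_zero ENNReal.ofNat_ne_top,
    ENNReal.toReal_ofReal (by positivity), ENNReal.toReal_ofNat,
    ← Real.rpow_mul_natCast (by positivity)]
  norm_num

lemma sum_norm_sq_integral_inner_le {α 𝕜 G : Type*} [MeasurableSpace α] {μ : Measure α} [RCLike 𝕜]
    [NormedAddCommGroup G] [InnerProductSpace 𝕜 G] {v : ι → Lp G 2 μ} (hv : Orthonormal 𝕜 v)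
    {g : α → G} (hg : MemLp g 2 μ) :
    ∑ n, ‖∫ a, inner 𝕜 (g a) (v n a) ∂μ‖ ^ 2 ≤ ∫ a, ‖g a‖ ^ 2 ∂μ := by
  have hinner (n : ι) : ∫ a, inner 𝕜 (g a) (v n a) ∂μ = inner 𝕜 (hg.toLp g) (v n) := by
    rw [L2.inner_def]
    refine integral_congr_ae ?_
    filter_upwards [hg.coeFn_toLp] with a ha
    rw [ha]
  calc ∑ n, ‖∫ a, inner 𝕜 (g a) (v n a) ∂μ‖ ^ 2
      = ∑ n, ‖inner 𝕜 (v n) (hg.toLp g)‖ ^ 2 := by simp only [hinner, norm_inner_symm]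
    _ ≤ ‖hg.toLp g‖ ^ 2 := hv.sum_inner_products_le _
    _ = ∫ a, ‖g a‖ ^ 2 ∂μ := norm_toLp_two_sq hg

lemma fourierMultiplierCLM_apply_eq_integral_inner {χ : E → ℝ} (hχ : χ.HasTemperateGrowth)
    (f : 𝓢(E, ℂ)) (x : E) :
    fourierMultiplierCLM ℂ χ f x
      = ∫ k, inner ℂ (Real.fourierChar (-inner ℝ k x) * χ k : ℂ) ((𝓕 f).toLp 2 volume k) := by
  rw [fourierMultiplierCLM_apply, fourierInv_coe, Real.fourierInv_eq]
  refine integral_congr_ae ?_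
  filter_upwards [(𝓕 f).coeFn_toLp 2] with k hk
  simp [hk, smulLeftCLM_apply_apply hχ, Circle.smul_def, ← Circle.coe_inv_eq_conj,
    AddChar.map_neg_eq_inv, mul_comm, mul_left_comm, mul_assoc]

lemma sum_norm_sq_fourierMultiplierCLM_apply_le {f : ι → 𝓢(E, ℂ)}
    (hf : Orthonormal ℂ fun n => (f n).toLp 2) {χ : E → ℝ} (hχ : χ.HasTemperateGrowth)
    (hχ2 : MemLp χ 2) (x : E) :
    ∑ n, ‖fourierMultiplierCLM ℂ χ (f n) x‖ ^ 2 ≤ ∫ k, χ k ^ 2 := by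
  have hnorm (k : E) : ‖(Real.fourierChar (-inner ℝ k x) * χ k : ℂ)‖ = ‖χ k‖ := by
    rw [norm_mul, Circle.norm_coe, one_mul, Complex.norm_real]
  have hwave : Continuous fun k => (Real.fourierChar (-inner ℝ k x) : ℂ) := by fun_prop
  have hmem : MemLp (fun k => (Real.fourierChar (-inner ℝ k x) * χ k : ℂ)) 2 :=
    hχ2.of_le (hwave.aestronglyMeasurable.mul
      (Complex.continuous_ofReal.comp_aestronglyMeasurable hχ2.1))
      (.of_forall fun k => (hnorm k).le)
  have hbessel := sum_norm_sq_integral_inner_le (orthonormal_toLp_fourier hf) hmem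
  simpa only [← fourierMultiplierCLM_apply_eq_integral_inner hχ, hnorm, Real.norm_eq_abs, sq_abs]
    using hbessel

lemma density_fourierMultiplierCLM_le {f : ι → 𝓢(E, ℂ)}
    (hf : Orthonormal ℂ fun n => (f n).toLp 2) {lam : ι → ℝ} (hlam : ∀ n, lam n ≤ 1)
    {χ : E → ℝ} (hχ : χ.HasTemperateGrowth) (hχ2 : MemLp χ 2) (x : E) :
    density lam (fun n => fourierMultiplierCLM ℂ χ (f n)) x ≤ ∫ k, χ k ^ 2 :=
  (Finset.sum_le_sum fun n _ => mul_le_of_le_one_left (sq_nonneg _) (hlam n)).trans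
    (sum_norm_sq_fourierMultiplierCLM_apply_le hf hχ hχ2 x)

end Bessel

section LiebThirring

open Metric

lemma integral_contDiffBump_sq_le (χ : ContDiffBump (0 : E)) :
    ∫ k, χ k ^ 2 ≤ volume.real (closedBall (0 : E) χ.rOut) :=
  calc ∫ k, χ k ^ 2 ≤ ∫ k, χ k :=
        integral_mono_of_nonneg (.of_forall fun _ => sq_nonneg _) χ.integrable
          (.of_forall fun _ => pow_le_of_le_one χ.nonneg χ.le_one two_ne_zero)
    _ ≤ volume.real (closedBall (0 : E) χ.rOut) := χ.integral_le_measure_closedBall volume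

lemma density_fourierMultiplierCLM_contDiffBump_le {f : ι → 𝓢(E, ℂ)}
    (hf : Orthonormal ℂ fun n => (f n).toLp 2) {lam : ι → ℝ} (hlam : ∀ n, lam n ≤ 1)
    (χ : ContDiffBump (0 : E)) (x : E) :
    density lam (fun n => fourierMultiplierCLM ℂ χ (f n)) x
      ≤ volume.real (closedBall (0 : E) χ.rOut) :=
  (density_fourierMultiplierCLM_le hf hlam
    (χ.hasCompactSupport.hasTemperateGrowth χ.contDiff)
    (χ.continuous.memLp_of_hasCompactSupport χ.hasCompactSupport) x).trans
    (integral_contDiffBump_sq_le χ)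

/-- The momentum distribution of the mixed state with orbitals `fₙ` and occupation numbers `λₙ`:
the measure whose Lebesgue density is `∑ₙ λₙ |𝓕 fₙ|²`. -/
noncomputable def momentumMeasure [NormedAddCommGroup F] [InnerProductSpace ℂ F] (lam : ι → ℝ)
    (f : ι → 𝓢(E, F)) : Measure E :=
  volume.withDensity fun k => ENNReal.ofReal (density lam (fun n => 𝓕 (f n)) k)

variable [NormedAddCommGroup F] [InnerProductSpace ℂ F]

lemma lintegral_norm_sq_momentumMeasure {lam : ι → ℝ} (hlam : ∀ n, 0 ≤ lam n)
    (f : ι → 𝓢(E, F)) {a : ℝ} (ha : 0 ≤ a) :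
    ∫⁻ k, ENNReal.ofReal (a * ‖k‖ ^ 2) ∂momentumMeasure lam f
      = ENNReal.ofReal (a * ∫ k, ‖k‖ ^ 2 * density lam (fun n => 𝓕 (f n)) k) := by
  have hdensity (k : E) := density_nonneg hlam (fun n => 𝓕 (f n)) k
  rw [momentumMeasure, lintegral_withDensity_eq_lintegral_mul _
      (continuous_density _ _).measurable.ennreal_ofReal (by fun_prop), ← integral_const_mul,
    ofReal_integral_eq_lintegral_ofReal ((integrable_norm_sq_mul_density_fourier lam f).const_mul a)
      (.of_forall fun k => mul_nonneg ha (mul_nonneg (sq_nonneg _) (hdensity k)))]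
  refine lintegral_congr fun k => ?_
  rw [Pi.mul_apply, ← ENNReal.ofReal_mul (hdensity k)]
  ring_nf

variable [CompleteSpace F]

lemma lintegral_density_sub_fourierMultiplierCLM_le {lam : ι → ℝ}
    (hlam : ∀ n, 0 ≤ lam n) (f : ι → 𝓢(E, F)) (χ : ContDiffBump (0 : E)) :
    ∫⁻ x, ENNReal.ofReal (density lam (fun n => f n - fourierMultiplierCLM F χ (f n)) x)
      ≤ momentumMeasure lam f {k | χ.rIn < ‖k‖} := by
  have hmeas : MeasurableSet {k : E | χ.rIn < ‖k‖} :=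
    measurableSet_lt measurable_const measurable_norm
  rw [lintegral_density_sub_fourierMultiplierCLM hlam
      (χ.hasCompactSupport.hasTemperateGrowth χ.contDiff), momentumMeasure,
    withDensity_apply _ hmeas, ← lintegral_indicator hmeas]
  refine lintegral_mono fun k => ?_
  by_cases hk : χ.rIn < ‖k‖
  · rw [Set.indicator_of_mem (by exact hk)]
    have hcut : (1 - χ k) ^ 2 ≤ 1 :=
      pow_le_one₀ (sub_nonneg.2 χ.le_one) (sub_le_self _ χ.nonneg)
    exact ENNReal.ofReal_le_ofReal (mul_le_of_le_one_left (density_nonneg hlam _ k) hcut)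
  · rw [χ.one_of_mem_closedBall (mem_closedBall_zero_iff.2 (not_lt.1 hk))]
    simp

/-- A smooth cutoff to the momenta `‖k‖ ≲ 2 ^ j`. -/
noncomputable def dyadicBump (E : Type*) [NormedAddCommGroup E] (j : ℤ) : ContDiffBump (0 : E) where
  rIn := 2 ^ j
  rOut := 2 ^ j * 2
  rIn_pos := by positivity
  rIn_lt_rOut := lt_mul_of_one_lt_right (by positivity) one_lt_two

lemma density_le_add_dyadicBump {f : ι → 𝓢(E, ℂ)}
    (hf : Orthonormal ℂ fun n => (f n).toLp 2) {lam : ι → ℝ} (hlam : ∀ n, 0 ≤ lam n ∧ lam n ≤ 1)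
    (x : E) (j : ℤ) :
    density lam f x
      ≤ 2 * density lam (fun n => f n - fourierMultiplierCLM ℂ (dyadicBump E j) (f n)) x
        + 2 * (volume.real (closedBall (0 : E) 2) * ((2 : ℝ) ^ j) ^ finrank ℝ E) := by
  have hvol : volume.real (closedBall (0 : E) (2 ^ j * 2))
      = volume.real (closedBall (0 : E) 2) * ((2 : ℝ) ^ j) ^ finrank ℝ E := by
    rw [Measure.addHaar_real_closedBall _ _ (by positivity),
      Measure.addHaar_real_closedBall _ _ zero_le_two, mul_pow]
    ring
  have hlow : density lam (fun n => fourierMultiplierCLM ℂ (dyadicBump E j) (f n)) x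
      ≤ volume.real (closedBall (0 : E) 2) * ((2 : ℝ) ^ j) ^ finrank ℝ E :=
    (density_fourierMultiplierCLM_contDiffBump_le hf (fun n => (hlam n).2)
      (dyadicBump E j) x).trans_eq hvol
  refine (density_le_two_mul_density_sub_add (fun n => (hlam n).1) f
    (fun n => fourierMultiplierCLM ℂ (dyadicBump E j) (f n)) x).trans ?_
  gcongr

lemma tsum_mul_lintegral_density_sub_le {lam : ι → ℝ} (hlam : ∀ n, 0 ≤ lam n)
    (f : ι → 𝓢(E, F)) :
    ∑' j : ℤ, ENNReal.ofReal (4 ^ j) * ∫⁻ x, ENNReal.ofReal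
        (density lam (fun n => f n - fourierMultiplierCLM F (dyadicBump E j) (f n)) x)
      ≤ ENNReal.ofReal (4 / 3 * ∫ k, ‖k‖ ^ 2 * density lam (fun n => 𝓕 (f n)) k) :=
  calc ∑' j : ℤ, ENNReal.ofReal (4 ^ j) * ∫⁻ x, ENNReal.ofReal
        (density lam (fun n => f n - fourierMultiplierCLM F (dyadicBump E j) (f n)) x)
      ≤ ∑' j : ℤ, ENNReal.ofReal (4 ^ j) * momentumMeasure lam f {k | (4 : ℝ) ^ j < ‖k‖ ^ 2} := by
        refine ENNReal.tsum_le_tsum fun j => mul_le_mul_right ?_ _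
        simp only [← two_zpow_sq, sq_lt_sq₀ (zpow_nonneg zero_le_two j) (norm_nonneg _)]
        exact lintegral_density_sub_fourierMultiplierCLM_le hlam f (dyadicBump E j)
    _ ≤ ∫⁻ k, ENNReal.ofReal (4 / (4 - 1) * ‖k‖ ^ 2) ∂momentumMeasure lam f :=
        tsum_zpow_mul_measure_lt_le _ (by fun_prop) (by norm_num)
    _ = ENNReal.ofReal (4 / 3 * ∫ k, ‖k‖ ^ 2 * density lam (fun n => 𝓕 (f n)) k) := by
        rw [lintegral_norm_sq_momentumMeasure hlam f (by norm_num)]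
        norm_num

/-- A constant for the Lieb–Thirring inequality on `E`; it depends on `E` only through its
dimension, and no attempt is made to optimise it. -/
noncomputable def liebThirringConst (E : Type*) [NormedAddCommGroup E] [InnerProductSpace ℝ E]
    [FiniteDimensional ℝ E] [MeasurableSpace E] [BorelSpace E] : ℝ :=
  3 * π ^ 2 * ((4 * volume.real (closedBall (0 : E) 2)) ^ (-(2 / finrank ℝ E) : ℝ) / 16)

variable (E) in
lemma volume_real_closedBall_two_pos : 0 < volume.real (closedBall (0 : E) 2) :=
  ENNReal.toReal_pos (measure_closedBall_pos _ _ two_pos).ne' measure_closedBall_lt_top.ne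

variable (E) in
lemma liebThirringConst_pos : 0 < liebThirringConst E := by
  have := volume_real_closedBall_two_pos E
  rw [liebThirringConst]
  positivity

lemma lintegral_density_rpow_le [Nontrivial E] {f : ι → 𝓢(E, ℂ)}
    (hf : Orthonormal ℂ fun n => (f n).toLp 2) {lam : ι → ℝ}
    (hlam : ∀ n, 0 ≤ lam n ∧ lam n ≤ 1) :
    ∫⁻ x, ENNReal.ofReal
        ((4 * volume.real (closedBall (0 : E) 2)) ^ (-(2 / finrank ℝ E) : ℝ) / 16
          * density lam f x ^ (1 + 2 / finrank ℝ E : ℝ))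
      ≤ ENNReal.ofReal (4 / 3 * ∫ k, ‖k‖ ^ 2 * density lam (fun n => 𝓕 (f n)) k) := by
  let high (j : ℤ) (n : ι) : 𝓢(E, ℂ) := f n - fourierMultiplierCLM ℂ (dyadicBump E j) (f n)
  have hmeas (j : ℤ) : Measurable (density lam (high j)) := (continuous_density _ _).measurable
  have hlam₀ (n : ι) : 0 ≤ lam n := (hlam n).1
  calc ∫⁻ x, ENNReal.ofReal
        ((4 * volume.real (closedBall (0 : E) 2)) ^ (-(2 / finrank ℝ E) : ℝ) / 16
          * density lam f x ^ (1 + 2 / finrank ℝ E : ℝ))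
      ≤ ∫⁻ x, ∑' j : ℤ, ENNReal.ofReal (4 ^ j * density lam (high j) x) :=
        lintegral_mono fun x => ofReal_rpow_le_tsum finrank_pos.ne'
          (volume_real_closedBall_two_pos E) (density_nonneg hlam₀ f x)
          (density_le_add_dyadicBump hf hlam x)
    _ = ∑' j : ℤ, ∫⁻ x, ENNReal.ofReal (4 ^ j * density lam (high j) x) :=
        lintegral_tsum fun j => ((hmeas j).const_mul _).ennreal_ofReal.aemeasurable
    _ = ∑' j : ℤ, ENNReal.ofReal (4 ^ j) * ∫⁻ x, ENNReal.ofReal (density lam (high j) x) := by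
        simp only [ENNReal.ofReal_mul (zpow_nonneg zero_le_four _),
          lintegral_const_mul _ (hmeas _).ennreal_ofReal]
    _ ≤ ENNReal.ofReal (4 / 3 * ∫ k, ‖k‖ ^ 2 * density lam (fun n => 𝓕 (f n)) k) :=
        tsum_mul_lintegral_density_sub_le hlam₀ f

lemma liebThirringConst_mul_integral_density_rpow_le [Nontrivial E] {f : ι → 𝓢(E, ℂ)}
    (hf : Orthonormal ℂ fun n => (f n).toLp 2) {lam : ι → ℝ}
    (hlam : ∀ n, 0 ≤ lam n ∧ lam n ≤ 1) :
    liebThirringConst E * ∫ x, density lam f x ^ (1 + 2 / finrank ℝ E : ℝ)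
      ≤ (2 * π) ^ 2 * ∫ k, ‖k‖ ^ 2 * density lam (fun n => 𝓕 (f n)) k := by
  set p : ℝ := 1 + 2 / finrank ℝ E
  set C : ℝ := (4 * volume.real (closedBall (0 : E) 2)) ^ (-(2 / finrank ℝ E) : ℝ) / 16
  have hC : 0 ≤ C := by positivity
  have hρ (g : ι → 𝓢(E, ℂ)) (x : E) : 0 ≤ density lam g x :=
    density_nonneg (fun n => (hlam n).1) g x
  have hmeas : Measurable fun x => C * density lam f x ^ p :=
    ((continuous_density lam f).measurable.pow_const p).const_mul C
  have hmomentum : C * ∫ x, density lam f x ^ p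
      ≤ 4 / 3 * ∫ k, ‖k‖ ^ 2 * density lam (fun n => 𝓕 (f n)) k := by
    rw [← integral_const_mul, integral_eq_lintegral_of_nonneg_ae
      (.of_forall fun x => mul_nonneg hC (Real.rpow_nonneg (hρ f x) p)) hmeas.aestronglyMeasurable]
    refine ENNReal.toReal_le_of_le_ofReal ?_ (lintegral_density_rpow_le hf hlam)
    exact mul_nonneg (by norm_num) (integral_nonneg fun k => mul_nonneg (sq_nonneg _) (hρ _ k))
  calc liebThirringConst E * ∫ x, density lam f x ^ p
      = 3 * π ^ 2 * (C * ∫ x, density lam f x ^ p) := mul_assoc _ _ _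
    _ ≤ 3 * π ^ 2 * (4 / 3 * ∫ k, ‖k‖ ^ 2 * density lam (fun n => 𝓕 (f n)) k) := by gcongr
    _ = (2 * π) ^ 2 * ∫ k, ‖k‖ ^ 2 * density lam (fun n => 𝓕 (f n)) k := by ring

theorem lieb_thirring_finite_general [Nontrivial E] {f : ι → 𝓢(E, ℂ)}
    (hf : Orthonormal ℂ fun n => (f n).toLp 2) {lam : ι → ℝ}
    (hlam : ∀ n, 0 ≤ lam n ∧ lam n ≤ 1) (b : OrthonormalBasis κ ℝ E) :
    liebThirringConst E * ∫ x, density lam f x ^ (1 + 2 / finrank ℝ E : ℝ)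
      ≤ ∑ n, lam n * ∫ x, ∑ i, ‖fderiv ℝ (f n) x (b i)‖ ^ 2 :=
  (liebThirringConst_mul_integral_density_rpow_le hf hlam).trans_eq
    (sum_mul_integral_sum_norm_sq_fderiv b lam f).symm

end LiebThirring

/-- **Lieb–Thirring inequality** for finite orthonormal families of smooth compactly
supported functions, with occupation numbers `λₙ ∈ [0,1]`:
`Σₙ λₙ ∫ |∇uₙ|² ≥ K_d ∫ ρ^{1+2/d}`, where `ρ = Σₙ λₙ |uₙ|²` and `K_d` depends
only on the dimension `d` (in particular, not on `N`). -/
theorem lieb_thirring_finite (d : ℕ) (hd : 1 ≤ d) :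
    ∃ K : ℝ, 0 < K ∧
      ∀ (N : ℕ), 1 ≤ N →
      ∀ (u : Fin N → EuclideanSpace ℝ (Fin d) → ℂ) (lam : Fin N → ℝ),
        (∀ n, ContDiff ℝ (⊤ : ℕ∞) (u n)) →
        (∀ n, HasCompactSupport (u n)) →
        (∀ m n : Fin N, ∫ x, u m x * (starRingEnd ℂ) (u n x) = if m = n then 1 else 0) →
        (∀ n, 0 ≤ lam n ∧ lam n ≤ 1) →
        ∑ n, lam n * ∫ x, gradSq (u n) x
          ≥ K * ∫ x, (∑ n, lam n * ‖u n x‖ ^ 2) ^ (1 + 2 / (d : ℝ)) := by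
  have : Nonempty (Fin d) := ⟨⟨0, hd⟩⟩
  refine ⟨liebThirringConst (EuclideanSpace ℝ (Fin d)), liebThirringConst_pos _,
    fun N _ u lam hu hsupp horth hlam => ?_⟩
  let f (n : Fin N) : 𝓢(EuclideanSpace ℝ (Fin d), ℂ) := (hsupp n).toSchwartzMap (hu n)
  have hcoe (n : Fin N) : ⇑(f n) = u n := rfl
  have hf : Orthonormal ℂ fun n => (f n).toLp 2 := orthonormal_toLp_iff.2 horth
  simpa [gradSq, density, hcoe] using
    lieb_thirring_finite_general hf hlam (EuclideanSpace.basisFun (Fin d) ℝ)
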